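/- Let y, b be positive integers with gcd(b,y) = 1, q a positive integer, and a an integer with gcd(a,q) = 1; set g = gcd(y,q) and ℓ = lcm(y,q). Then: (i) Υ(a,q) = 0 if 1 < g < q and gcd(g, q/g) > 1; (ii) Υ(a,q) = (φ(y)/φ(ℓ)) · μ(q/g) · e(−abt/g) if 1 ≤ g < q and gcd(g, q/g) = 1, where ḡ is a multiplicative inverse of g modulo q/g and t is the integer with 1 − gḡ = (q/g)t; (iii) Υ(a,q) = e(−ba/q) if g = q. -/

import Mathlib

noncomputable section

/-- `e(t) = e^{2πit}`. -/
def e2pi (t : ℝ) : ℂ := Complex.exp (2 * Real.pi * Complex.I * t)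

/-- The Gauss-type sum `Υ(a,q) = (φ(y)/φ(ℓ)) Σ_{1 ≤ r ≤ q, gcd(r,q)=1, r ≡ b (mod g)} e(-ra/q)`,
where `g = gcd(y,q)` and `ℓ = lcm(y,q)`. -/
def Ups (y : ℕ) (b : ℤ) (a : ℤ) (q : ℕ) : ℂ :=
  ((Nat.totient y : ℂ) / (Nat.totient (Nat.lcm y q) : ℂ)) *
    ∑ r ∈ (Finset.Icc 1 q).filter
        (fun r : ℕ => Nat.gcd r q = 1 ∧
          (r : ℤ) % (Nat.gcd y q : ℤ) = b % (Nat.gcd y q : ℤ)),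
      e2pi (-((((r : ℤ) * a : ℤ) : ℝ) / (q : ℝ)))

/-!
Detecting `gcd(r, q) = 1` by `∑_{d ∣ gcd(r, q)} μ(d)` turns the sum over reduced residues into
`∑_{d ∣ q} μ(d) T(d)`, where `T(d)` runs over the `r` with `d ∣ r` and `r ≡ b (mod g)`. As `b` is
prime to `g`, these conditions are contradictory unless `d` is prime to `g`, and then they define
one residue class mod `dg`, a divisor of `q`. The phase `r ↦ e(-ra/q)` is a character of `ℤ/q` which
is nontrivial on the multiples of `dg` unless `dg = q`, so only `d = q/g` survives, and `T(q/g)` is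
the single term at the solution of `r ≡ 0 (mod q/g)`, `r ≡ b (mod g)`, namely `r = b(q/g)t`.
-/

open ArithmeticFunction ArithmeticFunction.Moebius

theorem sum_divisors_filter_dvd_moebius {n : ℕ} (hn : n ≠ 0) (r : ℕ) :
    ∑ d ∈ n.divisors with d ∣ r, μ d = if r.Coprime n then 1 else 0 := by
  have hdivisors : {d ∈ n.divisors | d ∣ r} = (r.gcd n).divisors := by
    ext d
    simp only [Finset.mem_filter, Nat.mem_divisors, Nat.dvd_gcd_iff, Nat.gcd_ne_zero_right hn,
      ne_eq, hn, not_false_eq_true, and_true]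
    exact and_comm
  rw [hdivisors, ← coe_mul_zeta_apply, moebius_mul_coe_zeta, one_apply]

theorem sum_filter_coprime_eq_sum_divisors_moebius_smul {M : Type*} [AddCommGroup M] {n : ℕ}
    (hn : n ≠ 0) (s : Finset ℕ) (f : ℕ → M) :
    ∑ r ∈ s with r.Coprime n, f r = ∑ d ∈ n.divisors, μ d • ∑ r ∈ s with d ∣ r, f r := by
  calc ∑ r ∈ s with r.Coprime n, f r
      = ∑ r ∈ s, (∑ d ∈ n.divisors with d ∣ r, μ d) • f r := by
        simp only [sum_divisors_filter_dvd_moebius hn, ite_smul, one_smul, zero_smul,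
          Finset.sum_filter]
    _ = ∑ d ∈ n.divisors, μ d • ∑ r ∈ s with d ∣ r, f r := by
        simp only [Finset.sum_smul, Finset.smul_sum, Finset.sum_filter, ite_smul, zero_smul,
          smul_ite, smul_zero]
        exact Finset.sum_comm

theorem sum_Icc_natCast_zmod {M : Type*} [AddCommMonoid M] (n : ℕ) [NeZero n] (f : ZMod n → M) :
    ∑ r ∈ Finset.Icc 1 n, f r = ∑ x, f x := by
  calc ∑ r ∈ Finset.Icc 1 n, f r
      = ∑ r ∈ Finset.range n, f (r + 1 : ℕ) := by
        rw [Finset.range_eq_Ico, Finset.sum_Ico_add' (fun r : ℕ => f (r : ZMod n)) 0 n 1,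
          zero_add, Finset.Ico_add_one_right_eq_Icc]
    _ = ∑ x : ZMod n, f (x + 1) :=
        Finset.sum_nbij' (fun r => (r : ZMod n)) ZMod.val (fun _ _ => Finset.mem_univ _)
          (fun x _ => Finset.mem_range.2 x.val_lt)
          (fun _ hr => ZMod.val_cast_of_lt (Finset.mem_range.1 hr))
          (fun x _ => ZMod.natCast_zmod_val x) (fun _ _ => by rw [Nat.cast_succ])
    _ = ∑ x, f x := Equiv.sum_comp (Equiv.addRight 1) f

theorem sum_addChar_fiber_eq_zero {A B R : Type*} [AddGroup A] [Fintype A] [AddZeroClass B]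
    [DecidableEq B] [Semiring R] [IsCancelMulZero R] (φ : A →+ B) (ψ : AddChar A R) {h : A}
    (hφ : φ h = 0) (hψ : ψ h ≠ 1) (c : B) : ∑ x with φ x = c, ψ x = 0 := by
  have hshift : (∑ x with φ x = c, ψ x) * ψ h = ∑ x with φ x = c, ψ x := by
    rw [Finset.sum_mul, Finset.sum_filter, Finset.sum_filter,
      ← Equiv.sum_comp (Equiv.addRight h) fun x => if φ x = c then ψ x else 0]
    simp only [Equiv.coe_addRight, map_add, hφ, add_zero, AddChar.map_add_eq_mul]
  by_contra hsum
  exact hψ ((mul_eq_left₀ hsum).1 hshift)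

theorem e2pi_neg_div_eq_stdAddChar (n : ℕ) [NeZero n] (k : ℤ) :
    e2pi (-((k : ℝ) / (n : ℝ))) = ZMod.stdAddChar (-k : ZMod n) := by
  rw [← Int.cast_neg, ZMod.stdAddChar_coe, e2pi]
  push_cast
  ring_nf

theorem stdAddChar_mul_natCast_ne_one {n q : ℕ} [NeZero q] (hnq : n ∣ q) (hne : n ≠ q) {a : ℤ}
    (ha : IsCoprime a q) : ZMod.stdAddChar (a * n : ZMod q) ≠ 1 := by
  intro h
  have hzero : ((a * n : ℤ) : ZMod q) = 0 := by
    push_cast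
    exact ZMod.injective_stdAddChar (h.trans (AddChar.map_zero_eq_one _).symm)
  have hqn : (q : ℤ) ∣ n :=
    ha.symm.dvd_of_dvd_mul_left ((ZMod.intCast_zmod_eq_zero_iff_dvd _ _).1 hzero)
  exact hne (hnq.antisymm (Int.natCast_dvd_natCast.1 hqn))

/-- The exponential sum `∑ e(-ra/q)` over the `r ∈ {1, …, q}` satisfying `P`. Keeping `P` arbitrary
lets the Möbius sieve trade coprimality to `q` for divisibility conditions. -/
def expSum (q : ℕ) (a : ℤ) (P : ℕ → Prop) [DecidablePred P] : ℂ :=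
  ∑ r ∈ Finset.Icc 1 q with P r, e2pi (-((((r : ℤ) * a : ℤ) : ℝ) / (q : ℝ)))

section expSum

variable {q : ℕ}

theorem expSum_eq_zero_of_forall_not (a : ℤ) {P : ℕ → Prop} [DecidablePred P]
    (hP : ∀ r, ¬ P r) : expSum q a P = 0 := by
  rw [expSum, Finset.filter_false_of_mem fun r _ => hP r, Finset.sum_empty]

theorem expSum_dvd_and_modEq_eq_zero_of_not_coprime {d g : ℕ} (hgd : ¬ g.Coprime d) {b : ℤ}
    (hb : IsCoprime b g) (a : ℤ) : expSum q a (fun r => d ∣ r ∧ (r : ℤ) ≡ b [ZMOD g]) = 0 := by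
  obtain ⟨p, hp, hpg, hpd⟩ := Nat.Prime.not_coprime_iff_dvd.1 hgd
  refine expSum_eq_zero_of_forall_not a fun r ⟨hdr, hrb⟩ => ?_
  have hpg' : (p : ℤ) ∣ g := Int.natCast_dvd_natCast.2 hpg
  have hpb : (p : ℤ) ∣ b :=
    (hrb.of_dvd hpg').dvd_iff.1 (Int.natCast_dvd_natCast.2 (hpd.trans hdr))
  exact (Nat.prime_iff_prime_int.1 hp).not_isUnit (hb.isUnit_of_dvd' hpb hpg')

theorem expSum_dvd_and_modEq_eq_expSum_modEq {d g : ℕ} (hgd : g.Coprime d) (a : ℤ) {b c : ℤ}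
    (hdc : (d : ℤ) ∣ c) (hcb : c ≡ b [ZMOD g]) :
    expSum q a (fun r => d ∣ r ∧ (r : ℤ) ≡ b [ZMOD g]) =
      expSum q a (fun r => (r : ℤ) ≡ c [ZMOD (g * d : ℕ)]) := by
  have hcrt (r : ℕ) : d ∣ r ∧ (r : ℤ) ≡ b [ZMOD g] ↔ (r : ℤ) ≡ c [ZMOD (g * d : ℕ)] := by
    rw [Nat.cast_mul, ← Int.modEq_and_modEq_iff_modEq_mul (by simpa using hgd), and_comm,
      ← Int.natCast_dvd_natCast]
    refine and_congr ⟨fun hrb => hrb.trans hcb.symm, fun hrc => hrc.trans hcb⟩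
      ⟨fun hdr => ?_, fun hrc => hrc.dvd_iff.2 hdc⟩
    exact (Int.modEq_zero_iff_dvd.2 hdr).trans (Int.modEq_zero_iff_dvd.2 hdc).symm
  simp only [hcrt]

variable [NeZero q]

theorem expSum_modEq_eq_sum_zmod {n : ℕ} (hnq : n ∣ q) (a c : ℤ) :
    expSum q a (fun r => (r : ℤ) ≡ c [ZMOD n]) =
      ∑ x : ZMod q with ZMod.castHom hnq (ZMod n) x = c, ZMod.stdAddChar ((-a : ZMod q) * x) := by
  rw [expSum, Finset.sum_filter, Finset.sum_filter, ← sum_Icc_natCast_zmod]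
  refine Finset.sum_congr rfl fun r _ => ?_
  have hclass : ZMod.castHom hnq (ZMod n) r = c ↔ (r : ℤ) ≡ c [ZMOD n] := by
    rw [map_natCast, ← ZMod.intCast_eq_intCast_iff, Int.cast_natCast]
  rw [e2pi_neg_div_eq_stdAddChar]
  simp only [hclass, Int.cast_mul, Int.cast_natCast, neg_mul, mul_comm (a : ZMod q)]

theorem expSum_modEq_eq_zero_of_ne {n : ℕ} (hnq : n ∣ q) (hne : n ≠ q) {a : ℤ} (ha : IsCoprime a q)
    (c : ℤ) : expSum q a (fun r => (r : ℤ) ≡ c [ZMOD n]) = 0 := by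
  rw [expSum_modEq_eq_sum_zmod hnq]
  refine sum_addChar_fiber_eq_zero (ZMod.castHom hnq (ZMod n)).toAddMonoidHom
    (AddChar.mulShift ZMod.stdAddChar (-a : ZMod q)) (h := n) ?_ ?_ c
  · simp
  · simpa using stdAddChar_mul_natCast_ne_one hnq hne ha.neg_left

theorem expSum_modEq_self (a c : ℤ) :
    expSum q a (fun r => (r : ℤ) ≡ c [ZMOD q]) = e2pi (-(((c * a : ℤ) : ℝ) / (q : ℝ))) := by
  rw [expSum_modEq_eq_sum_zmod dvd_rfl, e2pi_neg_div_eq_stdAddChar]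
  simp [Finset.filter_eq', mul_comm]

theorem expSum_coprime_and_eq_sum_divisors (a : ℤ) (P : ℕ → Prop) [DecidablePred P] :
    expSum q a (fun r => r.Coprime q ∧ P r) =
      ∑ d ∈ q.divisors, (μ d : ℂ) * expSum q a (fun r => d ∣ r ∧ P r) := by
  simp only [expSum, and_comm (b := P _), ← Finset.filter_filter,
    sum_filter_coprime_eq_sum_divisors_moebius_smul (NeZero.ne q), zsmul_eq_mul]

theorem expSum_dvd_and_modEq_eq_zero_of_mul_ne {d g : ℕ} (hdq : d ∣ q) (hgq : g ∣ q)
    (hne : g * d ≠ q) {a b : ℤ} (ha : IsCoprime a q) (hb : IsCoprime b g) :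
    expSum q a (fun r => d ∣ r ∧ (r : ℤ) ≡ b [ZMOD g]) = 0 := by
  by_cases hgd : g.Coprime d
  · obtain ⟨v, u, huv⟩ := Nat.isCoprime_iff_coprime.2 hgd
    have hc : b * (u * d) ≡ b [ZMOD g] :=
      Int.modEq_iff_dvd.2 ⟨b * v, by linear_combination -b * huv⟩
    rw [expSum_dvd_and_modEq_eq_expSum_modEq hgd a (dvd_mul_of_dvd_right (dvd_mul_left _ _) b) hc]
    exact expSum_modEq_eq_zero_of_ne (hgd.mul_dvd_of_dvd_of_dvd hgq hdq) hne ha _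
  · exact expSum_dvd_and_modEq_eq_zero_of_not_coprime hgd hb a

theorem expSum_coprime_and_modEq_eq_moebius_mul {g m : ℕ} (hgm : g * m = q) {a b : ℤ}
    (ha : IsCoprime a q) (hb : IsCoprime b g) :
    expSum q a (fun r => r.Coprime q ∧ (r : ℤ) ≡ b [ZMOD g]) =
      μ m * expSum q a (fun r => m ∣ r ∧ (r : ℤ) ≡ b [ZMOD g]) := by
  have hg : g ≠ 0 := left_ne_zero_of_mul (hgm ▸ NeZero.ne q)
  rw [expSum_coprime_and_eq_sum_divisors]
  refine Finset.sum_eq_single_of_mem m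
    (Nat.mem_divisors.2 ⟨Dvd.intro_left _ hgm, NeZero.ne q⟩) fun d hd hdm => ?_
  have hne : g * d ≠ q := fun hgd => hdm (mul_left_cancel₀ hg (hgd.trans hgm.symm))
  rw [expSum_dvd_and_modEq_eq_zero_of_mul_ne (Nat.dvd_of_mem_divisors hd) (Dvd.intro _ hgm) hne ha
    hb, mul_zero]

theorem expSum_coprime_and_modEq_eq_zero_of_not_coprime {g m : ℕ} (hgm : g * m = q)
    (hcop : ¬ g.Coprime m) {a b : ℤ} (ha : IsCoprime a q) (hb : IsCoprime b g) :
    expSum q a (fun r => r.Coprime q ∧ (r : ℤ) ≡ b [ZMOD g]) = 0 := by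
  rw [expSum_coprime_and_modEq_eq_moebius_mul hgm ha hb,
    expSum_dvd_and_modEq_eq_zero_of_not_coprime hcop hb, mul_zero]

theorem expSum_coprime_and_modEq_of_coprime {g m : ℕ} (hgm : g * m = q) (hcop : g.Coprime m)
    {a b c : ℤ} (ha : IsCoprime a q) (hb : IsCoprime b g) (hmc : (m : ℤ) ∣ c)
    (hcb : c ≡ b [ZMOD g]) :
    expSum q a (fun r => r.Coprime q ∧ (r : ℤ) ≡ b [ZMOD g]) =
      μ m * e2pi (-(((c * a : ℤ) : ℝ) / (q : ℝ))) := by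
  rw [expSum_coprime_and_modEq_eq_moebius_mul hgm ha hb,
    expSum_dvd_and_modEq_eq_expSum_modEq hcop a hmc hcb, hgm, expSum_modEq_self]

theorem expSum_coprime_and_modEq_of_mul_modEq_one {g m : ℕ} (hgm : g * m = q)
    (hcop : g.Coprime m) {a b t : ℤ} (ha : IsCoprime a q) (hb : IsCoprime b g)
    (ht : m * t ≡ 1 [ZMOD g]) :
    expSum q a (fun r => r.Coprime q ∧ (r : ℤ) ≡ b [ZMOD g]) =
      μ m * e2pi (-(((a * b * t : ℤ) : ℝ) / (g : ℝ))) := by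
  have hclass : m * t * b ≡ b [ZMOD g] := by simpa only [one_mul] using ht.mul_right b
  have hm : (m : ℝ) ≠ 0 := Nat.cast_ne_zero.2 (right_ne_zero_of_mul (hgm ▸ NeZero.ne q))
  have hfrac : ((m * t * b * a : ℤ) : ℝ) / q = ((a * b * t : ℤ) : ℝ) / g := by
    rw [← hgm, Nat.cast_mul, ← mul_div_mul_right _ (g : ℝ) hm]
    push_cast
    ring
  rw [expSum_coprime_and_modEq_of_coprime hgm hcop ha hb
    (dvd_mul_of_dvd_left (dvd_mul_right _ t) b) hclass, hfrac]

end expSum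

theorem Ups_eq_mul_expSum (y : ℕ) (b a : ℤ) (q : ℕ) :
    Ups y b a q = ((Nat.totient y : ℂ) / (Nat.totient (Nat.lcm y q) : ℂ)) *
      expSum q a fun r => r.Coprime q ∧ (r : ℤ) ≡ b [ZMOD Nat.gcd y q] := rfl

theorem evaluation_of_Upsilon_general (y q : ℕ) (hy : 0 < y) (hq : 0 < q) (b : ℤ)
    (hb : IsCoprime b (Nat.gcd y q)) (a : ℤ) (ha : IsCoprime a q) :
    (¬ (Nat.gcd y q).Coprime (q / Nat.gcd y q) → Ups y b a q = 0) ∧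
    ((Nat.gcd y q).Coprime (q / Nat.gcd y q) →
      ∀ t : ℤ, (q / Nat.gcd y q : ℕ) * t ≡ 1 [ZMOD Nat.gcd y q] →
        Ups y b a q = ((Nat.totient y : ℂ) / (Nat.totient (Nat.lcm y q) : ℂ)) *
          μ (q / Nat.gcd y q) * e2pi (-(((a * b * t : ℤ) : ℝ) / (Nat.gcd y q : ℝ)))) ∧
    (Nat.gcd y q = q → Ups y b a q = e2pi (-(((b * a : ℤ) : ℝ) / (q : ℝ)))) := by
  have : NeZero q := ⟨hq.ne'⟩
  have hgm : Nat.gcd y q * (q / Nat.gcd y q) = q := Nat.mul_div_cancel' (Nat.gcd_dvd_right y q)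
  rw [Ups_eq_mul_expSum]
  refine ⟨fun hcop => ?_, fun hcop t ht => ?_, fun hgq => ?_⟩
  · rw [expSum_coprime_and_modEq_eq_zero_of_not_coprime hgm hcop ha hb, mul_zero]
  · rw [expSum_coprime_and_modEq_of_mul_modEq_one hgm hcop ha hb ht, ← mul_assoc]
  · have hlcm : Nat.lcm y q = y := Nat.lcm_eq_left (hgq ▸ Nat.gcd_dvd_left y q)
    have hφ : (Nat.totient y : ℂ) ≠ 0 := Nat.cast_ne_zero.2 (Nat.totient_pos.2 hy).ne'
    rw [hgq] at hb ⊢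
    rw [hlcm, div_self hφ, one_mul, expSum_coprime_and_modEq_of_coprime (mul_one q)
      (Nat.coprime_one_right q) ha hb (one_dvd b) rfl, moebius_apply_one, Int.cast_one, one_mul]

theorem evaluation_of_Upsilon (y b : ℕ) (hy : 0 < y) (hb0 : 0 < b) (hb : Nat.gcd b y = 1)
    (q : ℕ) (hq : 0 < q) (a : ℤ) (ha : Int.gcd a q = 1) :
    ((1 < Nat.gcd y q ∧ Nat.gcd y q < q ∧ 1 < Nat.gcd (Nat.gcd y q) (q / Nat.gcd y q)) →
        Ups y (b : ℤ) a q = 0) ∧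
    ((Nat.gcd y q < q ∧ Nat.gcd (Nat.gcd y q) (q / Nat.gcd y q) = 1) →
        ∀ gbar t : ℤ,
          Int.ModEq ((q / Nat.gcd y q : ℕ) : ℤ) ((Nat.gcd y q : ℤ) * gbar) 1 →
          1 - (Nat.gcd y q : ℤ) * gbar = ((q / Nat.gcd y q : ℕ) : ℤ) * t →
          Ups y (b : ℤ) a q =
            ((Nat.totient y : ℂ) / (Nat.totient (Nat.lcm y q) : ℂ)) *
              ((ArithmeticFunction.moebius (q / Nat.gcd y q) : ℤ) : ℂ) *
              e2pi (-(((a * (b : ℤ) * t : ℤ) : ℝ) / (Nat.gcd y q : ℝ)))) ∧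
    (Nat.gcd y q = q →
        Ups y (b : ℤ) a q = e2pi (-((((b : ℤ) * a : ℤ) : ℝ) / (q : ℝ)))) := by
  obtain ⟨hzero, hcoprime, hself⟩ := evaluation_of_Upsilon_general y q hy hq b
    (Nat.isCoprime_iff_coprime.2 (Nat.Coprime.coprime_dvd_right (Nat.gcd_dvd_left y q) hb)) a
    (Int.isCoprime_iff_gcd_eq_one.2 ha)
  exact ⟨fun h => hzero h.2.2.ne', fun h c t _ hct =>
    hcoprime h.2 t (Int.modEq_iff_dvd.2 ⟨c, by linarith⟩), hself⟩

end
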